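/- For positive integers c₁,…,c_n, let N(c₁,…,c_n) denote the number of words in W_{(c₁,…,c_n)} that avoid both of the patterns 231 and 221. Then N(c₁) = 1 for every positive integer c₁, and for n ≥ 2 and any positive integers c₁,…,c_n: N(c₁,…,c_n) = 2·N(c₁,…,c_{n−1}) + Σ_{i=1}^{n−2} N(c₁,…,c_i)·N(c_{i+1},…,c_{n−1}) + Σ_{i=1}^{n−1} Σ_{k=1}^{c_i−1} N(c₁,…,c_{i−1}, k)·N(c_i−k, c_{i+1},…,c_{n−1}). -/

import Mathlib

/-- Membership in `W_c`: `w` is a word over the positive integers with exactly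
`cᵢ` copies of the letter `i` for each `1 ≤ i ≤ n = c.length` (and no other letters). -/
def InW (c : List ℕ) (w : List ℕ) : Prop :=
  0 ∉ w ∧ ∀ i : ℕ, w.count (i + 1) = c.getD i 0

/-- The identity word `Id_c = 1^{c₁} 2^{c₂} ⋯ n^{c_n}`, the unique word in `W_c`
whose letters are nondecreasing from left to right. -/
def idWord (c : List ℕ) : List ℕ :=
  ((List.range c.length).map fun i => List.replicate (c.getD i 0) (i + 1)).flatten

/-- `w` contains the pattern `231`: there are indices `a < b < c` with
`w_c < w_a < w_b`. -/
def Contains231 (w : List ℕ) : Prop :=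
  ∃ a b c : ℕ, a < b ∧ b < c ∧ c < w.length ∧
    w.getD c 0 < w.getD a 0 ∧ w.getD a 0 < w.getD b 0

/-- `w` contains the pattern `221`: there are indices `a < b < c` with
`w_c < w_a = w_b`. -/
def Contains221 (w : List ℕ) : Prop :=
  ∃ a b c : ℕ, a < b ∧ b < c ∧ c < w.length ∧
    w.getD c 0 < w.getD a 0 ∧ w.getD a 0 = w.getD b 0

/-- `N(c₁, …, c_n)`: the number of words in `W_{(c₁, …, c_n)}` avoiding both of the
patterns `231` and `221`. -/
noncomputable def Ncount (c : List ℕ) : ℕ :=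
  {w : List ℕ | InW c w ∧ ¬Contains231 w ∧ ¬Contains221 w}.ncard

/-!
Let `n` be the largest letter, occurring `m + 1` times, and cut an avoiding word at its first `n`,
as `u n t`. Nothing smaller than `n` may follow a second `n`, so `t = v n ⋯ n` with `m` copies of
`n` at the end; and the first `n` forces every letter of `u` to be at most every letter of `v`.
Conversely, avoiding words `u`, `v` with this property give an avoiding word `u n v n ⋯ n`. Such a
pair `(u, v)` amounts to a position at which the sorted word `Id_{(c₁, …, c_{n-1})}` is cut in two,
together with an avoiding rearrangement of each part. Cutting at either end contributes
`N(c₁, …, c_{n-1})`, cutting between two blocks of equal letters gives the first sum of the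
recurrence, and cutting the block of the letter `i` after `k` copies gives the double sum.
-/

open scoped Finset

section Lists

variable {α : Type*} {L s s' t t' u v : List α} {n : α}

theorem eq_and_eq_of_append_cons_eq_append_cons (hs : n ∉ s) (hs' : n ∉ s')
    (h : s ++ n :: t = s' ++ n :: t') : s = s' ∧ t = t' := by
  classical
  have h_length : s.length = s'.length := by
    simpa [List.idxOf_append_of_notMem, hs, hs'] using congrArg (List.idxOf n) h
  simpa using List.append_inj h h_length

theorem drop_append_singleton_take {i : ℕ} (hi : i ≤ L.length) (x : α) :
    ((L ++ [x]).drop i).take (L.length - i) = L.drop i := by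
  rw [List.drop_append_of_le_length hi, List.take_left' List.length_drop]

theorem append_cons_append_replicate_perm_iff (m : ℕ) :
    (u ++ n :: (v ++ List.replicate m n)).Perm (L ++ List.replicate (m + 1) n) ↔
      (u ++ v).Perm L := by
  rw [List.replicate_succ, List.perm_middle.congr_left, List.perm_middle.congr_right,
    List.perm_cons, ← List.append_assoc, List.perm_append_right_iff]

end Lists

section Avoidance

variable {α β : Type*} [LinearOrder α] [LinearOrder β] {u v w : List α} {n : α}

/-- Simultaneous avoidance of `231` and `221`, over any linear order: there is no subword `a b c`
with `c < a ≤ b`. -/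
def IsAvoiding (w : List α) : Prop :=
  w.Triplewise fun a b c => a ≤ b → a ≤ c

theorem isAvoiding_iff_not_contains {w : List ℕ} :
    IsAvoiding w ↔ ¬Contains231 w ∧ ¬Contains221 w := by
  have h_getD : IsAvoiding w ↔ ∀ a b c, a < b → b < c → c < w.length →
      w.getD a 0 ≤ w.getD b 0 → w.getD a 0 ≤ w.getD c 0 := by
    rw [IsAvoiding, List.triplewise_iff_getElem]
    refine forall₅_congr fun a b c hab hbc => forall_congr' fun hc => ?_
    rw [List.getD_eq_getElem _ _ hc, List.getD_eq_getElem _ _ (hbc.trans hc),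
      List.getD_eq_getElem _ _ (hab.trans (hbc.trans hc))]
  rw [h_getD]
  constructor
  · intro h
    exact ⟨fun ⟨a, b, c, hab, hbc, hc, h_lt, h_le⟩ => (h a b c hab hbc hc h_le.le).not_gt h_lt,
      fun ⟨a, b, c, hab, hbc, hc, h_lt, h_eq⟩ => (h a b c hab hbc hc h_eq.le).not_gt h_lt⟩
  · rintro ⟨h231, h221⟩ a b c hab hbc hc h_le
    by_contra! h_lt
    rcases h_le.lt_or_eq with h | h
    · exact h231 ⟨a, b, c, hab, hbc, hc, h_lt, h⟩
    · exact h221 ⟨a, b, c, hab, hbc, hc, h_lt, h⟩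

theorem isAvoiding_map_iff {f : α → β} (hf : StrictMono f) :
    IsAvoiding (w.map f) ↔ IsAvoiding w := by
  simp only [IsAvoiding, List.triplewise_map, hf.le_iff_le]

theorem isAvoiding_replicate (m : ℕ) (n : α) : IsAvoiding (List.replicate m n) := by
  simp [IsAvoiding, List.triplewise_iff_getElem]

theorem isAvoiding_append_of_le (h : ∀ a ∈ u, ∀ c ∈ v, a ≤ c) :
    IsAvoiding (u ++ v) ↔ IsAvoiding u ∧ IsAvoiding v := by
  simp only [IsAvoiding, List.triplewise_append, and_congr_right_iff, and_iff_left_iff_imp]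
  exact fun _ _ => ⟨fun a ha => List.pairwise_of_forall_mem_list fun _ _ c hc _ => h a ha c hc,
    fun c hc => List.pairwise_of_forall_mem_list fun a ha _ _ _ => h a ha c hc⟩

theorem isAvoiding_cons_of_lt (h : ∀ x ∈ v, x < n) : IsAvoiding (n :: v) ↔ IsAvoiding v := by
  simp only [IsAvoiding, List.triplewise_cons, and_iff_right_iff_imp]
  exact fun _ => List.pairwise_of_forall_mem_list fun b hb _ _ hnb => absurd hnb (h b hb).not_ge

theorem isAvoiding_append_cons_append_replicate (hu : ∀ x ∈ u, x < n) (hv : ∀ x ∈ v, x < n)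
    (m : ℕ) :
    IsAvoiding (u ++ n :: (v ++ List.replicate m n)) ↔
      IsAvoiding u ∧ IsAvoiding v ∧ ∀ a ∈ u, ∀ c ∈ v, a ≤ c := by
  have h_le : IsAvoiding (u ++ n :: (v ++ List.replicate m n)) → ∀ a ∈ u, ∀ c ∈ v, a ≤ c := by
    intro h a ha c hc
    have h_pair := (List.triplewise_append.1 h).2.2.1 a ha
    exact (List.pairwise_cons.1 h_pair).1 c (List.mem_append_left _ hc) (hu a ha).le
  suffices h_iff : (∀ a ∈ u, ∀ c ∈ v, a ≤ c) →
      (IsAvoiding (u ++ n :: (v ++ List.replicate m n)) ↔ IsAvoiding u ∧ IsAvoiding v) by tauto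
  intro huv
  rw [isAvoiding_append_of_le, ← List.cons_append, isAvoiding_append_of_le,
    isAvoiding_cons_of_lt hv, and_iff_left (isAvoiding_replicate m n)]
  · grind
  · grind

theorem IsAvoiding.exists_eq_append_replicate {t : List α} (h : IsAvoiding (n :: t))
    (ht : ∀ x ∈ t, x ≤ n) : ∃ v m, t = v ++ List.replicate m n ∧ ∀ x ∈ v, x < n := by
  have h_pair : t.Pairwise fun b c => n ≤ b → n ≤ c := (List.triplewise_cons.1 h).1
  clear h
  induction t with
  | nil => exact ⟨[], 0, rfl, by simp⟩
  | cons x t ih =>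
    rw [List.pairwise_cons] at h_pair
    rcases (ht x List.mem_cons_self).lt_or_eq with hx | rfl
    · obtain ⟨v, m, rfl, hv⟩ := ih (List.forall_mem_of_forall_mem_cons ht) h_pair.2
      exact ⟨x :: v, m, rfl, List.forall_mem_cons.2 ⟨hx, hv⟩⟩
    · refine ⟨[], t.length + 1, ?_, by simp⟩
      have ht_eq : ∀ c ∈ t, c = x := fun c hc =>
        (ht c (List.mem_cons_of_mem _ hc)).antisymm (h_pair.1 c hc le_rfl)
      rw [List.nil_append, List.replicate_succ, ← List.eq_replicate_of_mem ht_eq]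

end Avoidance

section Avoiders

variable {α β : Type*} [LinearOrder α] [LinearOrder β] {L l u v w : List α} {n : α}

theorem perm_append_and_le_iff (hL : L.SortedLE) :
    (u ++ v).Perm L ∧ (∀ a ∈ u, ∀ c ∈ v, a ≤ c) ↔
      u.Perm (L.take u.length) ∧ v.Perm (L.drop u.length) := by
  constructor
  · rintro ⟨h_perm, huv⟩
    have hu := u.mergeSort_perm (· ≤ ·)
    have hv := v.mergeSort_perm (· ≤ ·)
    have h_sorted : (u.mergeSort ++ v.mergeSort).SortedLE := by
      rw [List.sortedLE_iff_pairwise, List.pairwise_append]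
      exact ⟨List.pairwise_mergeSort' _ _, List.pairwise_mergeSort' _ _,
        fun a ha b hb => huv a (hu.subset ha) b (hv.subset hb)⟩
    have hL_eq : L = u.mergeSort ++ v.mergeSort :=
      (h_perm.symm.trans (hu.append hv).symm).eq_of_sortedLE hL h_sorted
    rw [hL_eq, List.take_left' hu.length_eq, List.drop_left' hu.length_eq]
    exact ⟨hu.symm, hv.symm⟩
  · rintro ⟨hu, hv⟩
    refine ⟨by simpa using hu.append hv, fun a ha c hc => ?_⟩
    have h_sorted := hL.pairwise
    rw [← List.take_append_drop u.length L, List.pairwise_append] at h_sorted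
    exact h_sorted.2.2 a (hu.subset ha) c (hv.subset hc)

open Classical in
/-- The finite set of rearrangements of `l` that avoid both `231` and `221`. -/
noncomputable def avoiders (l : List α) : Finset (List α) :=
  {w ∈ l.permutations.toFinset | IsAvoiding w}

theorem mem_avoiders : w ∈ avoiders l ↔ w.Perm l ∧ IsAvoiding w := by
  simp [avoiders]

theorem card_avoiders_replicate (m : ℕ) (n : α) : #(avoiders (List.replicate m n)) = 1 := by
  refine Finset.card_eq_one.2 ⟨List.replicate m n, ?_⟩
  ext w
  rw [mem_avoiders, List.perm_replicate, Finset.mem_singleton, and_iff_left_iff_imp]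
  rintro rfl
  exact isAvoiding_replicate m n

theorem card_avoiders_map {f : α → β} (hf : StrictMono f) (l : List α) :
    #(avoiders (l.map f)) = #(avoiders l) := by
  suffices h : avoiders (l.map f) = (avoiders l).image (List.map f) by
    rw [h, Finset.card_image_of_injective _ hf.injective.list_map]
  ext w
  have h_perm : w.Perm (l.map f) ↔ ∃ w' : List α, w = w'.map f ∧ w'.Perm l :=
    (congrFun₂ (List.eq_map_comp_perm f) w l).symm.to_iff
  simp only [Finset.mem_image, mem_avoiders, h_perm]
  constructor
  · rintro ⟨⟨w', rfl, hw'⟩, hw⟩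
    exact ⟨w', ⟨hw', (isAvoiding_map_iff hf).1 hw⟩, rfl⟩
  · rintro ⟨w', ⟨hw', hw⟩, rfl⟩
    exact ⟨⟨w', rfl, hw'⟩, (isAvoiding_map_iff hf).2 hw⟩

theorem append_cons_mem_avoiders_iff (hL : L.SortedLE) (hn : ∀ x ∈ L, x < n) (m : ℕ) :
    u ++ n :: (v ++ List.replicate m n) ∈ avoiders (L ++ List.replicate (m + 1) n) ↔
      u ∈ avoiders (L.take u.length) ∧ v ∈ avoiders (L.drop u.length) := by
  have h_lt (h : (u ++ v).Perm L) : (∀ x ∈ u, x < n) ∧ ∀ x ∈ v, x < n :=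
    List.forall_mem_append.1 fun x hx => hn x (h.subset hx)
  have h_avoiding (h : (u ++ v).Perm L) :=
    isAvoiding_append_cons_append_replicate (h_lt h).1 (h_lt h).2 m
  have h_split := perm_append_and_le_iff (u := u) (v := v) hL
  simp only [mem_avoiders, append_cons_append_replicate_perm_iff]
  tauto

theorem exists_of_mem_avoiders_append_replicate {m : ℕ} (hn : ∀ x ∈ L, x < n)
    (hw : w ∈ avoiders (L ++ List.replicate (m + 1) n)) :
    ∃ u v, w = u ++ n :: (v ++ List.replicate m n) := by
  obtain ⟨h_perm, h_avoiding⟩ := mem_avoiders.1 hw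
  obtain ⟨u, t, rfl, hu⟩ := List.eq_append_cons_of_mem (h_perm.symm.subset (show n ∈ _ by simp))
  have ht : ∀ x ∈ t, x ≤ n := by
    intro x hx
    have hx' : x ∈ L ++ List.replicate (m + 1) n := h_perm.subset (by simp [hx])
    rcases List.mem_append.1 hx' with hxL | hxn
    · exact (hn x hxL).le
    · exact (List.eq_of_mem_replicate hxn).le
  have h_tail : IsAvoiding (n :: t) := (List.triplewise_append.1 h_avoiding).2.1
  obtain ⟨v, k, rfl, hv⟩ := h_tail.exists_eq_append_replicate ht
  have h_count : k + 1 = m + 1 := by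
    have hnL : n ∉ L := fun h => (hn n h).false
    have hnv : n ∉ v := fun h => (hv n h).false
    simpa [List.count_eq_zero_of_not_mem, hu, hnL, hnv] using h_perm.count_eq n
  exact ⟨u, v, by rw [Nat.succ_injective h_count]⟩

/-- The number of pairs of avoiding rearrangements of the two parts of `l`, cut after its first `j`
letters. -/
noncomputable def cutCount (l : List α) (j : ℕ) : ℕ :=
  #(avoiders (l.take j)) * #(avoiders (l.drop j))

theorem cutCount_append_length (u v : List α) :
    cutCount (u ++ v) u.length = #(avoiders u) * #(avoiders v) := by
  rw [cutCount, List.take_left, List.drop_left]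

theorem card_avoiders_append_replicate (hL : L.SortedLE) (hn : ∀ x ∈ L, x < n) (m : ℕ) :
    #(avoiders (L ++ List.replicate (m + 1) n)) =
      ∑ j ∈ Finset.range (L.length + 1), cutCount L j := by
  have h_length {j : ℕ} (hj : j ∈ Finset.range (L.length + 1)) {u : List α}
      (hu : u ∈ avoiders (L.take j)) : u.length = j := by
    rw [(mem_avoiders.1 hu).1.length_eq, List.length_take_of_le (Finset.mem_range_succ_iff.1 hj)]
  have h_notMem {j : ℕ} {u : List α} (hu : u ∈ avoiders (L.take j)) : n ∉ u := fun h =>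
    (hn n (List.mem_of_mem_take ((mem_avoiders.1 hu).1.subset h))).false
  simp_rw [cutCount, ← Finset.card_product]
  rw [← Finset.card_sigma]
  symm
  refine Finset.card_bij (fun p _ => p.2.1 ++ n :: (p.2.2 ++ List.replicate m n)) ?maps ?inj ?surj
  case maps =>
    rintro ⟨j, u, v⟩ h
    simp only [Finset.mem_sigma, Finset.mem_product] at h
    rw [append_cons_mem_avoiders_iff hL hn, h_length h.1 h.2.1]
    exact h.2
  case inj =>
    rintro ⟨i, u, v⟩ h ⟨j, u', v'⟩ h' h_eq
    simp only [Finset.mem_sigma, Finset.mem_product] at h h'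
    obtain ⟨rfl, h_tail⟩ :=
      eq_and_eq_of_append_cons_eq_append_cons (h_notMem h.2.1) (h_notMem h'.2.1) h_eq
    obtain rfl := List.append_cancel_right h_tail
    obtain rfl : i = j := (h_length h.1 h.2.1).symm.trans (h_length h'.1 h'.2.1)
    rfl
  case surj =>
    intro w hw
    obtain ⟨u, v, rfl⟩ := exists_of_mem_avoiders_append_replicate hn hw
    have huv := (append_cons_mem_avoiders_iff hL hn m).1 hw
    have hu_le : u.length ≤ L.length := by
      simpa using (mem_avoiders.1 huv.1).1.length_eq
    exact ⟨⟨u.length, u, v⟩, by simpa [Nat.lt_succ_iff, hu_le] using huv, rfl⟩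

end Avoiders

section Words

variable {c w : List ℕ} {i k m x : ℕ}

theorem idWord_cons (x : ℕ) (c : List ℕ) :
    idWord (x :: c) = List.replicate x 1 ++ (idWord c).map (· + 1) := by
  simp [idWord, List.range_succ_eq_map, List.map_flatten, Function.comp_def]

theorem idWord_singleton (x : ℕ) : idWord [x] = List.replicate x 1 := by
  simp [idWord]

theorem idWord_append (a b : List ℕ) :
    idWord (a ++ b) = idWord a ++ (idWord b).map (· + a.length) := by
  induction a with
  | nil => simp [idWord]
  | cons x a ih => simp [idWord_cons, ih, Function.comp_def, add_assoc]

theorem idWord_append_add_cons (a b : List ℕ) (k l : ℕ) :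
    idWord (a ++ (k + l) :: b) =
      idWord (a ++ [k]) ++ (idWord (l :: b)).map (· + a.length) := by
  rw [idWord_append, idWord_append, idWord_singleton, idWord_cons, idWord_cons l]
  simp only [List.replicate_add, List.map_append, List.append_assoc]

theorem length_idWord (c : List ℕ) : (idWord c).length = c.sum := by
  induction c with
  | nil => rfl
  | cons x c ih => simp [idWord_cons, ih]

theorem mem_Icc_of_mem_idWord (hx : x ∈ idWord c) : x ∈ Finset.Icc 1 c.length := by
  simp only [idWord, List.mem_flatten, List.mem_map, List.mem_range] at hx
  obtain ⟨_, ⟨i, hi, rfl⟩, hx⟩ := hx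
  rw [List.eq_of_mem_replicate hx]
  exact Finset.mem_Icc.2 ⟨Nat.succ_pos i, hi⟩

theorem sortedLE_idWord (c : List ℕ) : (idWord c).SortedLE := by
  induction c with
  | nil => exact List.Pairwise.nil.sortedLE
  | cons x c ih =>
    rw [List.sortedLE_iff_pairwise, idWord_cons, List.pairwise_append]
    refine ⟨by simp [List.pairwise_replicate], ?_, ?_⟩
    · exact ih.pairwise.map _ fun _ _ h => Nat.succ_le_succ h
    · intro a ha b hb
      obtain ⟨y, -, rfl⟩ := List.mem_map.1 hb
      exact (List.eq_of_mem_replicate ha).trans_le (Nat.le_add_left 1 y)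

theorem count_succ_idWord (c : List ℕ) (i : ℕ) : (idWord c).count (i + 1) = c.getD i 0 := by
  induction c generalizing i with
  | nil => simp [idWord]
  | cons x c ih =>
    rw [idWord_cons, List.count_append, List.count_map_of_injective _ _ (add_left_injective 1)]
    cases i with
    | zero =>
      have h_zero : 0 ∉ idWord c := fun h => by simpa using mem_Icc_of_mem_idWord h
      simp [List.count_eq_zero.2 h_zero]
    | succ i => simpa [List.count_replicate] using ih i

theorem inW_iff_perm_idWord : InW c w ↔ w.Perm (idWord c) := by
  have h_zero : (idWord c).count 0 = 0 :=
    List.count_eq_zero.2 fun h => by simpa using mem_Icc_of_mem_idWord h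
  rw [List.perm_iff_count, ← Nat.and_forall_add_one, InW, ← List.count_eq_zero, h_zero]
  simp only [count_succ_idWord]

theorem Ncount_eq_card_avoiders (c : List ℕ) : Ncount c = #(avoiders (idWord c)) := by
  rw [Ncount, ← Set.ncard_coe_finset]
  congr 1
  ext w
  simp [mem_avoiders, inW_iff_perm_idWord, isAvoiding_iff_not_contains]

theorem Ncount_eq_card_avoiders_map_add (c : List ℕ) (s : ℕ) :
    Ncount c = #(avoiders ((idWord c).map (· + s))) := by
  rw [Ncount_eq_card_avoiders, card_avoiders_map (add_left_strictMono (a := s))]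

theorem Ncount_singleton (x : ℕ) : Ncount [x] = 1 := by
  rw [Ncount_eq_card_avoiders, idWord_singleton, card_avoiders_replicate]

theorem Ncount_nil : Ncount [] = 1 := by
  rw [Ncount_eq_card_avoiders]
  exact card_avoiders_replicate 0 0

theorem cutCount_idWord_sum_take (c : List ℕ) (i : ℕ) :
    cutCount (idWord c) (c.take i).sum = Ncount (c.take i) * Ncount (c.drop i) := by
  have h_split := idWord_append (c.take i) (c.drop i)
  rw [List.take_append_drop] at h_split
  rw [h_split, ← length_idWord, cutCount_append_length, ← Ncount_eq_card_avoiders,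
    ← Ncount_eq_card_avoiders_map_add]

theorem cutCount_idWord_sum_take_add (hi : i < c.length) (hk : k ≤ c.getD i 0) :
    cutCount (idWord c) ((c.take i).sum + k) =
      Ncount (c.take i ++ [k]) * Ncount ((c.getD i 0 - k) :: c.drop (i + 1)) := by
  have h_sum : (c.take i).sum + k = (idWord (c.take i ++ [k])).length := by
    rw [length_idWord, List.sum_append, List.sum_singleton]
  have h_split := idWord_append_add_cons (c.take i) (c.drop (i + 1)) k (c.getD i 0 - k)
  rw [Nat.add_sub_cancel' hk, List.getD_eq_getElem _ _ hi, ← List.drop_eq_getElem_cons hi,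
    List.take_append_drop] at h_split
  rw [List.getD_eq_getElem _ _ hi, h_sum, h_split, cutCount_append_length,
    ← Ncount_eq_card_avoiders, ← Ncount_eq_card_avoiders_map_add]

theorem Ncount_append_singleton_eq_sum_cutCount (d : List ℕ) (hm : 0 < m) :
    Ncount (d ++ [m]) = ∑ j ∈ Finset.range (d.sum + 1), cutCount (idWord d) j := by
  obtain ⟨m, rfl⟩ := Nat.exists_eq_add_one.2 hm
  have h_word : idWord (d ++ [m + 1]) = idWord d ++ List.replicate (m + 1) (1 + d.length) := by
    rw [idWord_append, idWord_singleton, List.map_replicate]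
  have h_lt : ∀ x ∈ idWord d, x < 1 + d.length := fun x hx => by
    have := Finset.mem_Icc.1 (mem_Icc_of_mem_idWord hx)
    lia
  rw [Ncount_eq_card_avoiders, h_word, card_avoiders_append_replicate (sortedLE_idWord d) h_lt,
    length_idWord]

end Words

theorem sum_range_add_one_add {M : Type*} [AddCommMonoid M] (f : ℕ → M) (s y : ℕ) :
    ∑ k ∈ Finset.range (y + 1), f (s + 1 + k) =
      ∑ k ∈ Finset.Icc 1 y, f (s + k) + f (s + (y + 1)) := by
  rw [← Finset.sum_Icc_succ_top (by lia) fun k => f (s + k)]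
  simpa only [Finset.range_eq_Ico, add_assoc, add_comm 1, zero_add] using!
    Finset.sum_Ico_add' (fun k => f (s + k)) 0 (y + 1) 1

/-- Each nonzero `j ≤ c.sum` is either the end of one of the consecutive blocks of lengths
`c₁, c₂, …` or lies strictly inside one; positivity of the `cᵢ` keeps the ends distinct. -/
theorem sum_range_sum_add_one_eq_sum_blocks {M : Type*} [AddCommMonoid M] (f : ℕ → M) (c : List ℕ)
    (hc : ∀ x ∈ c, 0 < x) :
    ∑ j ∈ Finset.range (c.sum + 1), f j = f 0 + ∑ i ∈ Finset.Icc 1 c.length, f (c.take i).sum +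
      ∑ i ∈ Finset.Icc 1 c.length, ∑ k ∈ Finset.Icc 1 (c.getD (i - 1) 0 - 1),
        f ((c.take (i - 1)).sum + k) := by
  induction c using List.reverseRecOn with
  | nil => simp
  | append_singleton c x ih =>
    have h_take {i : ℕ} (hi : i ≤ c.length) : (c ++ [x]).take i = c.take i :=
      List.take_append_of_le_length hi
    have h_cuts : ∑ i ∈ Finset.Icc 1 c.length, f ((c ++ [x]).take i).sum =
        ∑ i ∈ Finset.Icc 1 c.length, f (c.take i).sum :=
      Finset.sum_congr rfl fun i hi => by rw [h_take (Finset.mem_Icc.1 hi).2]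
    have h_blocks :
        ∑ i ∈ Finset.Icc 1 c.length, ∑ k ∈ Finset.Icc 1 ((c ++ [x]).getD (i - 1) 0 - 1),
          f (((c ++ [x]).take (i - 1)).sum + k) =
        ∑ i ∈ Finset.Icc 1 c.length, ∑ k ∈ Finset.Icc 1 (c.getD (i - 1) 0 - 1),
          f ((c.take (i - 1)).sum + k) :=
      Finset.sum_congr rfl fun i hi => by
        have hi := Finset.mem_Icc.1 hi
        rw [h_take (by lia), List.getD_append _ _ _ _ (by lia)]
    obtain ⟨y, rfl⟩ := Nat.exists_eq_add_one.2 (hc x (by simp))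
    have h_take_all : (c ++ [y + 1]).take (c.length + 1) = c ++ [y + 1] :=
      List.take_of_length_le (by simp)
    have h_getD : (c ++ [y + 1]).getD c.length 0 = y + 1 := by simp
    rw [List.length_append, List.length_singleton, Finset.sum_Icc_succ_top (by lia),
      Finset.sum_Icc_succ_top (by lia), h_cuts, h_blocks, h_take_all, Nat.add_sub_cancel,
      h_take le_rfl, List.take_length, h_getD, Nat.add_sub_cancel, List.sum_append,
      List.sum_singleton, add_right_comm c.sum, Finset.sum_range_add, sum_range_add_one_add,
      ih fun z hz => hc z (by simp [hz])]
    abel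

theorem Ncount_append_singleton {d : List ℕ} {m : ℕ} (hd : d ≠ []) (hpos : ∀ x ∈ d, 0 < x)
    (hm : 0 < m) :
    Ncount (d ++ [m]) = 2 * Ncount d +
      (∑ i ∈ Finset.Icc 1 (d.length - 1), Ncount (d.take i) * Ncount (d.drop i)) +
      (∑ i ∈ Finset.Icc 1 d.length, ∑ k ∈ Finset.Icc 1 (d.getD (i - 1) 0 - 1),
        Ncount (d.take (i - 1) ++ [k]) * Ncount ((d.getD (i - 1) 0 - k) :: d.drop i)) := by
  have h_zero : cutCount (idWord d) 0 = Ncount d := by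
    simpa [Ncount_nil] using cutCount_idWord_sum_take d 0
  have h_between : ∑ i ∈ Finset.Icc 1 d.length, cutCount (idWord d) (d.take i).sum =
      ∑ i ∈ Finset.Icc 1 (d.length - 1), Ncount (d.take i) * Ncount (d.drop i) + Ncount d := by
    obtain ⟨r, hr⟩ := Nat.exists_eq_add_one.2 (List.length_pos_of_ne_nil hd)
    simp_rw [cutCount_idWord_sum_take]
    rw [hr, Finset.sum_Icc_succ_top (by lia), ← hr, List.take_length, List.drop_length, Ncount_nil,
      mul_one, hr, Nat.add_sub_cancel]
  have h_inside : ∀ i ∈ Finset.Icc 1 d.length, ∀ k ∈ Finset.Icc 1 (d.getD (i - 1) 0 - 1),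
      cutCount (idWord d) ((d.take (i - 1)).sum + k) =
        Ncount (d.take (i - 1) ++ [k]) * Ncount ((d.getD (i - 1) 0 - k) :: d.drop i) := by
    intro i hi k hk
    rw [Finset.mem_Icc] at hi hk
    rw [cutCount_idWord_sum_take_add (by lia) (by lia), Nat.sub_add_cancel hi.1]
  rw [Ncount_append_singleton_eq_sum_cutCount d hm, sum_range_sum_add_one_eq_sum_blocks _ _ hpos,
    h_zero, h_between, Finset.sum_congr rfl fun i hi => Finset.sum_congr rfl (h_inside i hi)]
  ring

/-- `N(c₁) = 1` for every positive integer `c₁`, and for `n ≥ 2` and positive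
integers `c₁, …, c_n`:
`N(c₁, …, c_n) = 2 N(c₁, …, c_{n-1}) + ∑_{i=1}^{n-2} N(c₁, …, c_i) N(c_{i+1}, …, c_{n-1})
+ ∑_{i=1}^{n-1} ∑_{k=1}^{c_i - 1} N(c₁, …, c_{i-1}, k) N(c_i - k, c_{i+1}, …, c_{n-1})`. -/
theorem Ncount_recurrence :
    (∀ c₁ : ℕ, 1 ≤ c₁ → Ncount [c₁] = 1) ∧
    (∀ c : List ℕ, 2 ≤ c.length → (∀ x ∈ c, 0 < x) →
      Ncount c =
        2 * Ncount (c.take (c.length - 1)) +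
        (∑ i ∈ Finset.Icc 1 (c.length - 2),
          Ncount (c.take i) * Ncount ((c.drop i).take (c.length - 1 - i))) +
        (∑ i ∈ Finset.Icc 1 (c.length - 1),
          ∑ k ∈ Finset.Icc 1 (c.getD (i - 1) 0 - 1),
            Ncount (c.take (i - 1) ++ [k]) *
              Ncount ((c.getD (i - 1) 0 - k) :: (c.drop i).take (c.length - 1 - i)))) := by
  refine ⟨fun c₁ _ => Ncount_singleton c₁, fun c hlen hpos => ?_⟩
  obtain rfl | ⟨d, m, rfl⟩ := List.eq_nil_or_concat' c
  · simp at hlen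
  have hd : d ≠ [] := by rintro rfl; simp at hlen
  obtain ⟨hpos_d, hpos_m⟩ := List.forall_mem_append.1 hpos
  have h_take {i : ℕ} (hi : i ≤ d.length) : (d ++ [m]).take i = d.take i :=
    List.take_append_of_le_length hi
  rw [Ncount_append_singleton hd hpos_d (hpos_m m (List.mem_singleton_self m)),
    List.length_append, List.length_singleton, Nat.add_sub_cancel, h_take le_rfl, List.take_length]
  congr 1
  · refine congrArg _ (Finset.sum_congr rfl fun i hi => ?_)
    have hi : i ≤ d.length := (Finset.mem_Icc.1 hi).2.trans (Nat.sub_le _ 1)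
    rw [h_take hi, drop_append_singleton_take hi]
  · refine Finset.sum_congr rfl fun i hi => ?_
    obtain ⟨hi₁, hi⟩ := Finset.mem_Icc.1 hi
    rw [h_take (by lia), drop_append_singleton_take hi, List.getD_append _ _ _ _ (by lia)]
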